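/- For an integer n ≥ 1, the prime simplicial complex Π(A_n) of the alternating group A_n is pure if and only if n ≤ 6 or n = 10. -/

import Mathlib

/-- A finite set of primes `S` is a *prime simplex* of the group `G` if it is nonempty,
consists of primes, and `G` contains an element whose order is the product of the
primes in `S`. -/
def IsPrimeSimplex (G : Type*) [Group G] (S : Finset ℕ) : Prop :=
  S.Nonempty ∧ (∀ p ∈ S, p.Prime) ∧ ∃ g : G, orderOf g = ∏ p ∈ S, p

/-- A prime simplex is maximal if it is maximal with respect to inclusion among
prime simplices. -/
def IsMaximalPrimeSimplex (G : Type*) [Group G] (S : Finset ℕ) : Prop :=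
  IsPrimeSimplex G S ∧ ∀ T : Finset ℕ, IsPrimeSimplex G T → S ⊆ T → T = S

/-- The prime simplicial complex of `G` is *pure* if all maximal prime simplices have
the same cardinality. -/
def PurePrimeSimplicialComplex (G : Type*) [Group G] : Prop :=
  ∀ S T : Finset ℕ, IsMaximalPrimeSimplex G S → IsMaximalPrimeSimplex G T →
    S.card = T.card

/-!
An even permutation whose order is divisible by every prime in `S` moves at least `w(p)` points for
each `p ∈ S`, where `w(p) = p` for odd `p` and `w(2) = 4`, since the number of cycles of even length
is even. Hence `S` is a simplex of `Π(A_n)` iff its total weight is at most `n`.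

Iterating Bertrand's postulate in two ways gives facets of different sizes. Greedily choosing a
prime greater than half of the remaining room yields a facet with at most `k` elements whenever
`n + 2 ≤ 2 ^ (k + 2)`. Starting from `{2, 3, 5, 7, 11}`, of weight `30 < 2 ^ 5`, and repeatedly
adding a prime between `x` and `2 * x`, where `x` bounds the previous ones, at most doubles the
weight, so for `k ≥ 5` some `k` primes have weight less than `2 ^ k`. For `n ≥ 31` and
`k = ⌊log₂ (n + 1)⌋` there are therefore facets with at most `k - 1` and with at least `k` elements.
-/

open Finset Equiv.Perm

section PureFamily

variable {ι : Type*} {P : Finset ι → Prop}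

/-- Purity of the family of finsets satisfying `P`: all its maximal members have the same number of
elements. Unlike in `PurePrimeSimplicialComplex`, the empty set may be a member. -/
def IsPureFamily (P : Finset ι → Prop) : Prop :=
  ∀ S T, Maximal P S → Maximal P T → #S = #T

lemma isPureFamily_of_exists_superset_card_eq {k : ℕ}
    (h : ∀ S, P S → ∃ T, S ⊆ T ∧ P T ∧ #T = k) : IsPureFamily P := by
  have card_eq : ∀ S, Maximal P S → #S = k := by
    intro S hS
    obtain ⟨T, hST, hT, rfl⟩ := h S hS.prop
    rw [hS.eq_of_le hT hST]
  intro S T hS hT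
  rw [card_eq S hS, card_eq T hT]

lemma isPureFamily_of_card_le_one (h : ∀ S, P S → #S ≤ 1) : IsPureFamily P := by
  have card_le : ∀ S T, Maximal P S → Maximal P T → #T ≤ #S := by
    intro S T hS hT
    obtain rfl | hne := S.eq_empty_or_nonempty
    · rw [hS.eq_of_le hT.prop (empty_subset T)]
    · exact (h T hT.prop).trans hne.card_pos
  exact fun S T hS hT => (card_le T S hT hS).antisymm (card_le S T hS hT)

end PureFamily

section Weight

/-- The least number of points on which there is an even permutation of order `p`, for a prime `p`:
a `p`-cycle if `p` is odd, a product of two disjoint transpositions if `p = 2`. -/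
def primeWeight (p : ℕ) : ℕ := if p = 2 then 4 else p

/-- `S` consists of primes of total weight at most `n`. The nonempty such sets are the prime
simplices of the alternating group of degree `n`. -/
def IsLight (n : ℕ) (S : Finset ℕ) : Prop :=
  (∀ p ∈ S, p.Prime) ∧ ∑ p ∈ S, primeWeight p ≤ n

lemma primeWeight_of_ne_two {p : ℕ} (hp : p ≠ 2) : primeWeight p = p := if_neg hp

lemma le_primeWeight (p : ℕ) : p ≤ primeWeight p := by
  unfold primeWeight
  split_ifs <;> omega

variable {n p : ℕ} {S : Finset ℕ}

lemma isLight_empty : IsLight n ∅ := by simp [IsLight]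

lemma isLight_insert (hp : p ∉ S) :
    IsLight n (insert p S) ↔ p.Prime ∧ primeWeight p ≤ n ∧ IsLight (n - primeWeight p) S := by
  simp only [IsLight, forall_mem_insert, sum_insert hp]
  grind

lemma IsLight.mono {m : ℕ} (hS : IsLight m S) (hmn : m ≤ n) : IsLight n S :=
  ⟨hS.1, hS.2.trans hmn⟩

lemma IsLight.primeWeight_le (hS : IsLight n S) (hp : p ∈ S) : primeWeight p ≤ n :=
  (single_le_sum_of_canonicallyOrdered hp).trans hS.2

lemma IsLight.le (hS : IsLight n S) (hp : p ∈ S) : p ≤ n :=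
  (le_primeWeight p).trans (hS.primeWeight_le hp)

lemma IsLight.subset_primesLE (hS : IsLight n S) : S ⊆ n.primesLE := fun p hp =>
  Nat.mem_primesLE.2 ⟨hS.le hp, hS.1 p hp⟩

lemma IsLight.exists_maximal_superset (hS : IsLight n S) :
    ∃ T, S ⊆ T ∧ Maximal (IsLight n) T := by
  have hfin : {T | IsLight n T}.Finite :=
    (finite_toSet n.primesLE.powerset).subset fun T hT => mem_powerset.2 hT.subset_primesLE
  exact hfin.exists_le_maximal hS

lemma IsLight.not_isPureFamily {T : Finset ℕ} (hS : IsLight n S) (hT : Maximal (IsLight n) T)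
    (hcard : #T < #S) : ¬ IsPureFamily (IsLight n) := by
  obtain ⟨S', hSS', hS'⟩ := hS.exists_maximal_superset
  intro hpure
  exact (hcard.trans_le (card_le_card hSS')).ne (hpure T S' hT hS')

end Weight

section CycleType

lemma prod_map_neg_neg_one_pow {M : Type*} [CommMonoid M] [HasDistribNeg M] (m : Multiset ℕ) :
    (m.map fun n => -(-1 : M) ^ n).prod = (-1) ^ m.countP (2 ∣ ·) := by
  induction m using Multiset.induction_on with
  | empty => simp
  | cons c m ih =>
    simp only [Multiset.map_cons, Multiset.prod_cons, ih, Multiset.countP_cons]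
    split_ifs with hc
    · simp [(even_iff_two_dvd.2 hc).neg_one_pow, pow_succ]
    · simp [(Nat.odd_iff.2 (Nat.two_dvd_ne_zero.1 hc)).neg_one_pow]

lemma dvd_multiset_lcm_iff_of_prime {M : Type*} [CommMonoidWithZero M] [NormalizedGCDMonoid M]
    {p : M} (hp : Prime p) {m : Multiset M} : p ∣ m.lcm ↔ ∃ c ∈ m, p ∣ c := by
  induction m using Multiset.induction_on with
  | empty => simpa using hp.not_dvd_one
  | cons c m ih => simp [hp.dvd_lcm, ih]

lemma sum_le_prod_of_two_le {ι : Type*} {f : ι → ℕ} {s : Finset ι} (hf : ∀ i ∈ s, 2 ≤ f i) :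
    ∑ i ∈ s, f i ≤ ∏ i ∈ s, f i := by
  classical
  obtain rfl | hs := s.eq_empty_or_nonempty
  · simp
  induction hs using Finset.Nonempty.cons_induction with
  | singleton => simp
  | cons a s ha hs ih =>
    rw [forall_mem_cons] at hf
    have hsum : ∑ i ∈ s, f i ≤ ∏ i ∈ s, f i := ih hf.2
    have htwo : 2 ≤ ∏ i ∈ s, f i := by
      obtain ⟨i, hi⟩ := hs
      exact (hf.2 i hi).trans ((single_le_sum_of_canonicallyOrdered hi).trans hsum)
    rw [sum_cons, prod_cons]
    exact (Nat.add_le_add_left hsum _).trans (add_le_mul hf.1 htwo)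

lemma sum_primeFactors_le {n : ℕ} (hn : n ≠ 0) : ∑ p ∈ n.primeFactors, p ≤ n :=
  (sum_le_prod_of_two_le fun _ hp => (Nat.prime_of_mem_primeFactors hp).two_le).trans
    (Nat.le_of_dvd hn.bot_lt n.prod_primeFactors_dvd)

lemma sum_mul_countP_dvd_le_sum {S : Finset ℕ} (hS : ∀ p ∈ S, p.Prime) {m : Multiset ℕ}
    (hm : 0 ∉ m) : ∑ p ∈ S, p * m.countP (p ∣ ·) ≤ m.sum := by
  induction m using Multiset.induction_on with
  | empty => simp
  | cons c m ih =>
    obtain ⟨hc, hm⟩ : c ≠ 0 ∧ 0 ∉ m := by simpa [eq_comm] using hm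
    have hsub : S.filter (· ∣ c) ⊆ c.primeFactors := fun p hp => by
      obtain ⟨hpS, hpc⟩ := mem_filter.1 hp
      exact Nat.mem_primeFactors.2 ⟨hS p hpS, hpc, hc⟩
    have hdvd : ∑ p ∈ S with p ∣ c, p ≤ c :=
      (sum_le_sum_of_subset hsub).trans (sum_primeFactors_le hc)
    calc ∑ p ∈ S, p * (c ::ₘ m).countP (p ∣ ·)
        = ∑ p ∈ S, p * m.countP (p ∣ ·) + ∑ p ∈ S with p ∣ c, p := by
          simp only [Multiset.countP_cons, mul_add, sum_add_distrib, mul_ite, mul_one, mul_zero,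
            sum_filter]
      _ ≤ m.sum + c := Nat.add_le_add (ih hm) hdvd
      _ = (c ::ₘ m).sum := by rw [Multiset.sum_cons, add_comm]

end CycleType

section AlternatingGroup

variable {α : Type*} [Fintype α] [DecidableEq α] {S : Finset ℕ}

lemma mem_alternatingGroup_iff_even_countP {σ : Equiv.Perm α} :
    σ ∈ alternatingGroup α ↔ Even (σ.cycleType.countP (2 ∣ ·)) := by
  rw [mem_alternatingGroup, sign_of_cycleType', prod_map_neg_neg_one_pow,
    neg_one_pow_eq_one_iff_even (by decide)]

lemma sum_primeWeight_le_card (hS : ∀ p ∈ S, p.Prime) {σ : Equiv.Perm α}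
    (hσ : σ ∈ alternatingGroup α) (hdvd : ∀ p ∈ S, p ∣ orderOf σ) :
    ∑ p ∈ S, primeWeight p ≤ Fintype.card α := by
  have hweight : ∀ p ∈ S, primeWeight p ≤ p * σ.cycleType.countP (p ∣ ·) := by
    intro p hp
    have hpos : 0 < σ.cycleType.countP (p ∣ ·) := by
      rw [Multiset.countP_pos, ← dvd_multiset_lcm_iff_of_prime (hS p hp).prime, lcm_cycleType]
      exact hdvd p hp
    unfold primeWeight
    split_ifs with h2
    · subst h2
      obtain ⟨k, hk⟩ := mem_alternatingGroup_iff_even_countP.1 hσ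
      omega
    · exact Nat.le_mul_of_pos_right p hpos
  have hzero : 0 ∉ σ.cycleType := fun h => absurd (two_le_of_mem_cycleType h) (by decide)
  calc ∑ p ∈ S, primeWeight p ≤ ∑ p ∈ S, p * σ.cycleType.countP (p ∣ ·) := sum_le_sum hweight
    _ ≤ σ.cycleType.sum := sum_mul_countP_dvd_le_sum hS hzero
    _ ≤ Fintype.card α := sum_cycleType_le σ

/-- The cycle type of an even permutation of order `∏ p ∈ S, p` and support of least size, for a set
`S` of primes: one cycle of each length `p ∈ S`, and a second transposition if `2 ∈ S`. -/
def evenCycleType (S : Finset ℕ) : Multiset ℕ := S.val + if 2 ∈ S then {2} else 0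

lemma mem_evenCycleType {p : ℕ} : p ∈ evenCycleType S ↔ p ∈ S := by
  unfold evenCycleType
  split_ifs <;> simp +contextual [or_iff_left_of_imp, *]

lemma sum_evenCycleType : (evenCycleType S).sum = ∑ p ∈ S, primeWeight p := by
  have hsplit : ∀ p, primeWeight p = p + if p = 2 then 2 else 0 := fun p => by
    unfold primeWeight
    split_ifs <;> omega
  simp only [evenCycleType, Multiset.sum_add, hsplit, sum_add_distrib, sum_ite_eq', sum_val]
  split_ifs <;> simp

lemma even_countP_evenCycleType (hS : ∀ p ∈ S, p.Prime) :
    Even ((evenCycleType S).countP (2 ∣ ·)) := by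
  have hfilter : S.filter (2 ∣ ·) = S.filter (· = 2) := filter_congr fun p hp => by
    rw [Nat.prime_dvd_prime_iff_eq Nat.prime_two (hS p hp), eq_comm]
  have hcount : S.val.countP (2 ∣ ·) = if 2 ∈ S then 1 else 0 := by
    rw [Multiset.countP_eq_card_filter, ← filter_val, card_val, hfilter, filter_eq']
    split_ifs <;> simp
  rw [evenCycleType, Multiset.countP_add, hcount]
  split_ifs
  · exact ⟨1, rfl⟩
  · simp

lemma lcm_evenCycleType (hS : ∀ p ∈ S, p.Prime) : (evenCycleType S).lcm = ∏ p ∈ S, p := by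
  have hcoprime : (S : Set ℕ).Pairwise (Nat.Coprime.onFun id) := fun p hp q hq hpq =>
    (Nat.coprime_primes (hS p hp) (hS q hq)).2 hpq
  have hlcm : S.val.lcm = ∏ p ∈ S, p := by
    simpa [lcm_def] using Finset.lcm_eq_prod hcoprime
  rw [← hlcm]
  exact dvd_antisymm
    (Multiset.lcm_dvd.2 fun p hp => Multiset.dvd_lcm (mem_evenCycleType.1 hp))
    (Multiset.lcm_dvd.2 fun p hp => Multiset.dvd_lcm (mem_evenCycleType.2 hp))

lemma exists_mem_alternatingGroup_orderOf_eq (hS : IsLight (Fintype.card α) S) :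
    ∃ σ ∈ alternatingGroup α, orderOf σ = ∏ p ∈ S, p := by
  obtain ⟨hprime, hweight⟩ := hS
  obtain ⟨σ, hσ⟩ := (exists_with_cycleType_iff α (m := evenCycleType S)).2
    ⟨sum_evenCycleType.trans_le hweight, fun p hp => (hprime p (mem_evenCycleType.1 hp)).two_le⟩
  refine ⟨σ, ?_, ?_⟩
  · rw [mem_alternatingGroup_iff_even_countP, hσ]
    exact even_countP_evenCycleType hprime
  · rw [← lcm_cycleType, hσ, lcm_evenCycleType hprime]

lemma isPrimeSimplex_alternatingGroup_iff :
    IsPrimeSimplex (alternatingGroup α) S ↔ S.Nonempty ∧ IsLight (Fintype.card α) S := by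
  refine and_congr_right fun _ => ⟨?_, fun hS => ⟨hS.1, ?_⟩⟩
  · rintro ⟨hS, σ, hσ⟩
    refine ⟨hS, sum_primeWeight_le_card hS σ.2 fun p hp => ?_⟩
    rw [Subgroup.orderOf_coe, hσ]
    exact dvd_prod_of_mem _ hp
  · obtain ⟨σ, hmem, hσ⟩ := exists_mem_alternatingGroup_orderOf_eq hS
    exact ⟨⟨σ, hmem⟩, by rwa [Subgroup.orderOf_mk]⟩

lemma isMaximalPrimeSimplex_alternatingGroup_iff :
    IsMaximalPrimeSimplex (alternatingGroup α) S ↔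
      S.Nonempty ∧ Maximal (IsLight (Fintype.card α)) S := by
  simp only [IsMaximalPrimeSimplex, isPrimeSimplex_alternatingGroup_iff]
  constructor
  · rintro ⟨⟨hne, hS⟩, hmax⟩
    exact ⟨hne, hS, fun T hT hST => (hmax T ⟨hne.mono hST, hT⟩ hST).le⟩
  · rintro ⟨hne, hS⟩
    exact ⟨⟨hne, hS.prop⟩, fun T hT hST => (hS.eq_of_le hT.2 hST).symm⟩

lemma pure_alternatingGroup_iff :
    PurePrimeSimplicialComplex (alternatingGroup α) ↔
      IsPureFamily (IsLight (Fintype.card α)) := by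
  simp only [PurePrimeSimplicialComplex, isMaximalPrimeSimplex_alternatingGroup_iff]
  constructor
  · intro h S T hS hT
    obtain rfl | hSne := S.eq_empty_or_nonempty
    · rw [hS.eq_of_le hT.prop (empty_subset T)]
    obtain rfl | hTne := T.eq_empty_or_nonempty
    · rw [hT.eq_of_le hS.prop (empty_subset S)]
    exact h S T ⟨hSne, hS⟩ ⟨hTne, hT⟩
  · exact fun h S T hS hT => h S T hS.2 hT.2

end AlternatingGroup

section Bertrand

variable {n p k : ℕ}

lemma exists_maximal_isLight_card_le_succ (hp : p.Prime) (hp2 : p ≠ 2) (hpn : p ≤ n)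
    (hnp : n < 2 * p) (h : ∃ T, Maximal (IsLight (n - p)) T ∧ #T ≤ k) :
    ∃ T, Maximal (IsLight n) T ∧ #T ≤ k + 1 := by
  obtain ⟨T, hT, hcard⟩ := h
  have hpT : p ∉ T := fun hmem => by
    have := hT.prop.le hmem
    omega
  refine ⟨insert p T, ⟨?_, fun U hU hTU => ?_⟩, ?_⟩
  · rw [isLight_insert hpT, primeWeight_of_ne_two hp2]
    exact ⟨hp, hpn, hT.prop⟩
  · have hpU : p ∈ U := hTU (mem_insert_self p T)
    have herase : IsLight (n - p) (U.erase p) := by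
      rw [← insert_erase hpU, isLight_insert (notMem_erase p U), primeWeight_of_ne_two hp2] at hU
      exact hU.2.2
    have hTerase : T ⊆ U.erase p := subset_erase.2 ⟨(subset_insert p T).trans hTU, hpT⟩
    exact subset_insert_iff.2 (hT.le_of_ge herase hTerase)
  · exact (card_insert_le p T).trans (Nat.add_le_add_right hcard 1)

lemma exists_odd_prime_half_lt (hn : 3 ≤ n) : ∃ p, p.Prime ∧ p ≠ 2 ∧ p ≤ n ∧ n < 2 * p := by
  obtain rfl | hn : n = 3 ∨ 4 ≤ n := by omega
  · exact ⟨3, by norm_num⟩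
  · obtain ⟨p, hp, hlt, hle⟩ := Nat.exists_prime_lt_and_le_two_mul (n / 2) (by omega)
    exact ⟨p, hp, by omega, by omega, by omega⟩

lemma exists_maximal_isLight_card_le (hn : n + 2 ≤ 2 ^ (k + 2)) :
    ∃ T, Maximal (IsLight n) T ∧ #T ≤ k := by
  induction k generalizing n with
  | zero =>
    obtain ⟨T, -, hT⟩ := isLight_empty (n := n).exists_maximal_superset
    refine ⟨T, hT, ?_⟩
    have hempty : T = ∅ := eq_empty_of_forall_notMem fun p hp => by
      have hweight := hT.prop.primeWeight_le hp
      have hprime := (hT.prop.1 p hp).two_le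
      unfold primeWeight at hweight
      split_ifs at hweight <;> omega
    simp [hempty]
  | succ k ih =>
    obtain hsmall | hlarge := lt_or_ge n 3
    · have hpow : 2 ^ 2 ≤ 2 ^ (k + 2) := Nat.pow_le_pow_right two_pos (by omega)
      obtain ⟨T, hT, hcard⟩ := ih (n := n) (by omega)
      exact ⟨T, hT, hcard.trans k.le_succ⟩
    · obtain ⟨p, hp, hp2, hpn, hnp⟩ := exists_odd_prime_half_lt hlarge
      rw [show k + 1 + 2 = (k + 2) + 1 by ring, pow_succ] at hn
      exact exists_maximal_isLight_card_le_succ hp hp2 hpn hnp (ih (by omega))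

lemma exists_primes_card_eq_weight_lt (hk : 5 ≤ k) :
    ∃ S : Finset ℕ, (∀ p ∈ S, p.Prime) ∧ #S = k ∧ ∑ p ∈ S, primeWeight p < 2 ^ k := by
  -- If `2 * x` is at most the weight of `S`, adding a prime `q ≤ 2 * x` at most doubles the weight,
  -- and the new set satisfies the same inequality with `q` in place of `x`.
  suffices h : ∃ S : Finset ℕ, ∃ x ≥ 2, (∀ p ∈ S, p.Prime ∧ p ≤ x) ∧ #S = k ∧
      2 * x ≤ ∑ p ∈ S, primeWeight p ∧ ∑ p ∈ S, primeWeight p < 2 ^ k by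
    obtain ⟨S, x, -, hS, hcard, -, hweight⟩ := h
    exact ⟨S, fun p hp => (hS p hp).1, hcard, hweight⟩
  induction k, hk using Nat.le_induction with
  | base => exact ⟨{2, 3, 5, 7, 11}, 11, by decide +kernel⟩
  | succ k hk ih =>
    obtain ⟨S, x, hx, hS, rfl, htwo_mul, hweight⟩ := ih
    obtain ⟨q, hq, hxq, hqx⟩ := Nat.exists_prime_lt_and_le_two_mul x (by omega)
    have hqS : q ∉ S := fun h => hxq.not_ge (hS q h).2
    have hsum : ∑ p ∈ insert q S, primeWeight p = q + ∑ p ∈ S, primeWeight p := by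
      rw [sum_insert hqS, primeWeight_of_ne_two (by omega)]
    refine ⟨insert q S, q, hq.two_le, ?_, card_insert_of_notMem hqS, ?_, ?_⟩
    · exact (forall_mem_insert ..).2
        ⟨⟨hq, le_rfl⟩, fun p hp => ⟨(hS p hp).1, (hS p hp).2.trans hxq.le⟩⟩
    · omega
    · rw [pow_succ]
      omega

end Bertrand

section Purity

variable {n : ℕ}

lemma not_isPureFamily_isLight_of_prime {p : ℕ} {S : Finset ℕ} (hp : p.Prime) (hp2 : p ≠ 2)
    (hpn : p ≤ n) (hnp : n < 2 * p) (hS : IsLight n S) (hcard : 2 ≤ #S)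
    (hroom : n + 2 ≤ p + 2 ^ #S) : ¬ IsPureFamily (IsLight n) := by
  obtain ⟨k, hk⟩ := Nat.exists_eq_add_of_le' hcard
  rw [hk] at hroom
  obtain ⟨T, hT, hTcard⟩ := exists_maximal_isLight_card_le_succ hp hp2 hpn hnp
    (exists_maximal_isLight_card_le (k := k) (by omega))
  exact hS.not_isPureFamily hT (by omega)

lemma not_isPureFamily_isLight_of_ge (hn : 31 ≤ n) : ¬ IsPureFamily (IsLight n) := by
  set k := Nat.log 2 (n + 1)
  have hk : 5 ≤ k := Nat.le_log_of_pow_le one_lt_two (by omega)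
  have hle : 2 ^ k ≤ n + 1 := Nat.pow_log_le_self 2 (by omega)
  have hlt : n + 1 < 2 ^ (k + 1) := Nat.lt_pow_succ_log_self one_lt_two (n + 1)
  obtain ⟨S, hS, hcard, hweight⟩ := exists_primes_card_eq_weight_lt hk
  obtain ⟨p, hp, hp2, hpn, hnp⟩ := exists_odd_prime_half_lt (n := n) (by omega)
  rw [pow_succ] at hlt
  exact not_isPureFamily_isLight_of_prime hp hp2 hpn hnp ⟨hS, by omega⟩ (by omega)
    (by rw [hcard]; omega)

lemma not_isPureFamily_isLight_of_lt (h7 : 7 ≤ n) (h31 : n < 31) (h10 : n ≠ 10) :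
    ¬ IsPureFamily (IsLight n) := by
  have h23 : IsLight 7 {2, 3} := by norm_num [IsLight, primeWeight]
  have h235 : IsLight 12 {2, 3, 5} := by norm_num [IsLight, primeWeight]
  have h2357 : IsLight 19 {2, 3, 5, 7} := by norm_num [IsLight, primeWeight]
  obtain h | h | h | h | h : (7 ≤ n ∧ n ≤ 9) ∨ n = 11 ∨ (12 ≤ n ∧ n ≤ 17) ∨ n = 18 ∨ 19 ≤ n := by
    omega
  · exact not_isPureFamily_isLight_of_prime (p := 7) (by norm_num) (by norm_num) (by omega)
      (by omega) (h23.mono (by omega)) (by simp) (by simp; omega)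
  · exact not_isPureFamily_isLight_of_prime (p := 11) (by norm_num) (by norm_num) (by omega)
      (by omega) (h23.mono (by omega)) (by simp) (by simp; omega)
  · exact not_isPureFamily_isLight_of_prime (p := 11) (by norm_num) (by norm_num) (by omega)
      (by omega) (h235.mono (by omega)) (by simp) (by simp; omega)
  · exact not_isPureFamily_isLight_of_prime (p := 13) (by norm_num) (by norm_num) (by omega)
      (by omega) (h235.mono (by omega)) (by simp) (by simp; omega)
  · exact not_isPureFamily_isLight_of_prime (p := 19) (by norm_num) (by norm_num) (by omega)
      (by omega) (h2357.mono (by omega)) (by simp) (by simp; omega)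

lemma isPureFamily_isLight_of_le_six (hn : n ≤ 6) : IsPureFamily (IsLight n) := by
  refine isPureFamily_of_card_le_one fun S hS => card_le_one.2 fun p hp q hq => ?_
  by_contra hpq
  have hpair : primeWeight p + primeWeight q ≤ n := by
    rw [← sum_pair hpq]
    exact (sum_le_sum_of_subset (insert_subset hp (singleton_subset_iff.2 hq))).trans hS.2
  have hp' := (hS.1 p hp).two_le
  have hq' := (hS.1 q hq).two_le
  unfold primeWeight at hpair
  split_ifs at hpair <;> omega

lemma isPureFamily_isLight_ten : IsPureFamily (IsLight 10) := by
  have hfacet : ∀ S ∈ (Nat.primesLE 10).powerset, ∑ p ∈ S, primeWeight p ≤ 10 →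
      S ⊆ {2, 3} ∨ S ⊆ {2, 5} ∨ S ⊆ {3, 5} ∨ S ⊆ {3, 7} := by
    decide +kernel
  refine isPureFamily_of_exists_superset_card_eq (k := 2) fun S hS => ?_
  obtain h | h | h | h := hfacet S (mem_powerset.2 hS.subset_primesLE) hS.2
  · exact ⟨{2, 3}, h, by norm_num [IsLight, primeWeight]⟩
  · exact ⟨{2, 5}, h, by norm_num [IsLight, primeWeight]⟩
  · exact ⟨{3, 5}, h, by norm_num [IsLight, primeWeight]⟩
  · exact ⟨{3, 7}, h, by norm_num [IsLight, primeWeight]⟩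

lemma isPureFamily_isLight_iff : IsPureFamily (IsLight n) ↔ n ≤ 6 ∨ n = 10 := by
  constructor
  · intro h
    by_contra! hn
    obtain hlt | hge := lt_or_ge n 31
    · exact not_isPureFamily_isLight_of_lt (by omega) hlt hn.2 h
    · exact not_isPureFamily_isLight_of_ge hge h
  · rintro (hn | rfl)
    · exact isPureFamily_isLight_of_le_six hn
    · exact isPureFamily_isLight_ten

end Purity

theorem stmt_9_general (α : Type*) [Fintype α] [DecidableEq α] :
    PurePrimeSimplicialComplex (alternatingGroup α) ↔
      Fintype.card α ≤ 6 ∨ Fintype.card α = 10 :=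
  pure_alternatingGroup_iff.trans isPureFamily_isLight_iff

theorem stmt_9 (n : ℕ) (hn : 1 ≤ n) :
    PurePrimeSimplicialComplex (alternatingGroup (Fin n)) ↔ n ≤ 6 ∨ n = 10 := by
  simpa using stmt_9_general (Fin n)
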